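/- For every real ε, every positive integer N (h = 1/N), every vector (ψ₀,…,ψ_{N−1}) ∈ ℂ^N with associated step function ψ_h = Σ_{j=0}^{N−1} ψ_j χ_{j+ε}, and every 1-periodic function u ∈ C¹(ℝ, ℂ), one has | h Σ_{j=0}^{N−1} ψ_j u(t_{j+ε}) | ≤ ‖ψ_h‖₀ ( ‖u‖₀ + π h ‖u‖₁ ). -/

import Mathlib

/-!
By the Cauchy–Schwarz inequality for finite sums, it suffices to bound the discrete norm:
`h ∑ⱼ |u(tⱼ)|² ≤ (‖u‖₀ + π h ‖u‖₁)²`.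

Put `g = |u|²`, so that `|g'| ≤ 2 |u| |u'|`. The point `tⱼ` is the midpoint of a cell of length `h`;
comparing `g(tⱼ)` with `g(t)` on each half of the cell and integrating in `t` gives
`h g(tⱼ) ≤ ∫_cell g + (h/2) ∫_cell 2 |u| |u'|` (`cell_bound`). Summing over the cells, which tile one
period, and applying Cauchy–Schwarz in `L²(0,1)` yields
`h ∑ⱼ |u(tⱼ)|² ≤ ‖u‖² + h ‖u‖ ‖u'‖ ≤ (‖u‖ + (h/2) ‖u'‖)²` with `L²` norms (`discrete_bound`).
Parseval's identity gives `‖u‖ = ‖u‖₀` and `‖u'‖ ≤ 2π ‖u‖₁`, the Fourier coefficients of `u'` being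
`2πim û(m)`.
-/

noncomputable section

/-- Smooth kernel data, 1-periodic in each variable. -/
def SPK (A : ℝ → ℝ → ℂ) : Prop :=
  ContDiff ℝ (⊤ : ℕ∞) (fun p : ℝ × ℝ => A p.1 p.2) ∧
    (∀ s t, A (s + 1) t = A s t) ∧ (∀ s t, A s (t + 1) = A s t)

/-- Logarithmic kernel `V(s,t) = (i/(2π)) A(s,t) log(sin²(π(s−t))) + K(s,t)`. -/
def logKer (A K : ℝ → ℝ → ℂ) (s t : ℝ) : ℂ :=
  Complex.I / (2 * Real.pi) * A s t * (Real.log (Real.sin (Real.pi * (s - t)) ^ 2) : ℂ) + K s t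

/-- Grid point `s_{j+ε} = (j − 1/2 + ε)h`. -/
def sg (h ε : ℝ) (j : ℤ) : ℝ := ((j : ℝ) - 1 / 2 + ε) * h

/-- Grid point `t_{j+ε} = (j + ε)h`. -/
def tg (h ε : ℝ) (j : ℤ) : ℝ := ((j : ℝ) + ε) * h

/-- Integral operator with kernel `V`. -/
def Vop (V : ℝ → ℝ → ℂ) (φ : ℝ → ℂ) (s : ℝ) : ℂ := ∫ t in (0:ℝ)..1, V s t * φ t

/-- Hypersingular operator `W = −D V₁ D + V₂`. -/
def Wop (V1 V2 : ℝ → ℝ → ℂ) (φ : ℝ → ℂ) (s : ℝ) : ℂ :=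
  -deriv (Vop V1 (deriv φ)) s + Vop V2 φ s

/-- Nyström matrix entries `W^ε_{ij}`. -/
def Wmat (V1 V2 : ℝ → ℝ → ℂ) (h ε : ℝ) (i j : ℤ) : ℂ :=
  V1 (sg h ε (i + 1)) (sg h 0 (j + 1)) - V1 (sg h ε i) (sg h 0 (j + 1))
    - V1 (sg h ε (i + 1)) (sg h 0 j) + V1 (sg h ε i) (sg h 0 j)
    + (h : ℂ) ^ 2 * V2 (tg h ε i) (tg h 0 j)

/-- Fourier coefficient of a 1-periodic function. -/
def fc (u : ℝ → ℂ) (m : ℤ) : ℂ :=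
  ∫ t in (0:ℝ)..1, u t * Complex.exp (-(2 * Real.pi * Complex.I * (m : ℂ) * (t : ℂ)))

/-- Periodic Sobolev norm of order `r`. -/
def sobNorm (r : ℝ) (u : ℝ → ℂ) : ℝ :=
  Real.sqrt (‖fc u 0‖ ^ 2 +
    ∑' m : ℤ, if m = 0 then 0 else |(m : ℝ)| ^ (2 * r) * ‖fc u m‖ ^ 2)

/-- 1-periodic step function on the ε-shifted grid with coefficients `v`. -/
def stepf (N : ℕ) (ε : ℝ) (v : ZMod N → ℂ) (s : ℝ) : ℂ :=
  v ((⌊s * N + 1 / 2 - ε⌋ : ℤ) : ZMod N)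

/-- Midpoint quadrature error matrix entries `E^ε_{ij}`. -/
def Emat (V2 : ℝ → ℝ → ℂ) (h ε : ℝ) (i j : ℤ) : ℂ :=
  (∫ s in (sg h ε i)..(sg h ε (i + 1)), ∫ t in (sg h 0 j)..(sg h 0 (j + 1)), V2 s t)
    - (h : ℂ) ^ 2 * V2 (tg h ε i) (tg h 0 j)

/-- Spectral (ℓ²-operator) norm of a complex `N×N` matrix. -/
def specNorm {N : ℕ} (M : Matrix (Fin N) (Fin N) ℂ) : ℝ :=
  ‖LinearMap.toContinuousLinearMap (Matrix.toEuclideanLin M)‖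

/-- The function `C̄₁(t) = −(1/(2πi)) log(4 sin²(πt))`. -/
def Cbar1 (t : ℝ) : ℂ :=
  -(1 / (2 * Real.pi * Complex.I)) * (Real.log (4 * Real.sin (Real.pi * t) ^ 2) : ℂ)

end

open MeasureTheory intervalIntegral

lemma fc_eq_fourierCoeffOn (u : ℝ → ℂ) (m : ℤ) :
    fc u m = fourierCoeffOn (zero_lt_one (α := ℝ)) u m := by
  rw [fourierCoeffOn_eq_integral, fc]
  simp only [sub_zero, div_one, one_smul, smul_eq_mul]
  refine integral_congr fun x _ => ?_
  simp only [fourier_coe_apply]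
  rw [mul_comm]
  congr 2
  push_cast
  ring

lemma hasSum_fc_sq {u : ℝ → ℂ} (hu : Continuous u) :
    HasSum (fun m => ‖fc u m‖ ^ 2) (∫ x in (0:ℝ)..1, ‖u x‖ ^ 2) := by
  have hL : MemLp u 2 (volume.restrict (Set.Ioc (0:ℝ) 1)) := by
    rw [memLp_two_iff_integrable_sq_norm hu.aestronglyMeasurable]
    exact ((hu.norm.pow 2).intervalIntegrable 0 1).1
  have := hasSum_sq_fourierCoeffOn (zero_lt_one (α := ℝ)) hL
  simpa [fc_eq_fourierCoeffOn] using this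

lemma fc_deriv {u : ℝ → ℂ} (hu : ContDiff ℝ 1 u) (hper : Function.Periodic u 1) (m : ℤ) :
    fc (deriv u) m = 2 * Real.pi * Complex.I * m * fc u m := by
  have hd : ∀ x, HasDerivAt u (deriv u x) x := fun x =>
    (hu.differentiable one_ne_zero x).hasDerivAt
  have hc : Continuous (deriv u) := hu.continuous_deriv le_rfl
  have h01 : u 1 = u 0 := by simpa using hper 0
  rcases eq_or_ne m 0 with rfl | hm
  · simp only [fc, Int.cast_zero, mul_zero, zero_mul, neg_zero, Complex.exp_zero, mul_one]
    rw [integral_eq_sub_of_hasDerivAt (fun x _ => hd x) (hc.intervalIntegrable _ _), h01, sub_self]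
  · have := fourierCoeffOn_of_hasDerivAt (zero_lt_one (α := ℝ)) hm (fun x _ => hd x)
      (hc.intervalIntegrable 0 1)
    rw [fc_eq_fourierCoeffOn, fc_eq_fourierCoeffOn, this, h01]
    have hm' : (m : ℂ) ≠ 0 := by exact_mod_cast hm
    have hpi : (Real.pi : ℂ) ≠ 0 := by exact_mod_cast Real.pi_ne_zero
    have := Complex.I_ne_zero
    simp only [sub_self, mul_zero, zero_sub, Complex.ofReal_one, Complex.ofReal_zero, sub_zero]
    field_simp

lemma sobNorm_zero_eq {u : ℝ → ℂ} (hu : Continuous u) :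
    sobNorm 0 u = Real.sqrt (∫ x in (0:ℝ)..1, ‖u x‖ ^ 2) := by
  have h := hasSum_fc_sq hu
  rw [← h.tsum_eq, h.summable.tsum_eq_add_tsum_ite 0, sobNorm]
  simp

lemma sqrt_integral_deriv_le {u : ℝ → ℂ} (hu : ContDiff ℝ 1 u) (hper : Function.Periodic u 1) :
    Real.sqrt (∫ x in (0:ℝ)..1, ‖deriv u x‖ ^ 2) ≤ 2 * Real.pi * sobNorm 1 u := by
  have h := hasSum_fc_sq (hu.continuous_deriv le_rfl)
  have e : (fun m : ℤ => ‖fc (deriv u) m‖ ^ 2) = fun m : ℤ => (2 * Real.pi) ^ 2 *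
      (if m = 0 then 0 else |(m : ℝ)| ^ (2 * (1:ℝ)) * ‖fc u m‖ ^ 2) := by
    funext m
    rw [fc_deriv hu hper]
    split_ifs with hm
    · simp [hm]
    · have : |(m : ℝ)| ^ (2 * (1:ℝ)) = |(m : ℝ)| ^ 2 := by
        rw [mul_one, Real.rpow_two]
      rw [this]
      simp only [norm_mul, Complex.norm_I, Complex.norm_real, Complex.norm_intCast,
        Complex.norm_ofNat, Real.norm_eq_abs, abs_of_pos Real.pi_pos]
      ring
  rw [← h.tsum_eq, e, tsum_mul_left, Real.sqrt_mul (by positivity), Real.sqrt_sq (by positivity),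
    sobNorm]
  gcongr
  exact le_add_of_nonneg_left (by positivity)

/-- Cauchy–Schwarz on an interval, from the discriminant of `∫ (x f + g)² ≥ 0`. -/
lemma integral_mul_le_sqrt {f g : ℝ → ℝ} (hf : Continuous f) (hg : Continuous g) :
    ∫ x in (0:ℝ)..1, f x * g x ≤
      Real.sqrt (∫ x in (0:ℝ)..1, f x ^ 2) * Real.sqrt (∫ x in (0:ℝ)..1, g x ^ 2) := by
  have hA : 0 ≤ ∫ x in (0:ℝ)..1, f x ^ 2 :=
    integral_nonneg zero_le_one fun x _ => sq_nonneg _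
  have key := discrim_le_zero (a := ∫ x in (0:ℝ)..1, f x ^ 2)
    (b := 2 * ∫ x in (0:ℝ)..1, f x * g x) (c := ∫ x in (0:ℝ)..1, g x ^ 2) fun y => by
      have h0 : 0 ≤ ∫ x in (0:ℝ)..1, (y * f x + g x) ^ 2 :=
        integral_nonneg zero_le_one fun x _ => sq_nonneg _
      have e : ∫ x in (0:ℝ)..1, (y * f x + g x) ^ 2 =
          ∫ x in (0:ℝ)..1, (y * y * f x ^ 2 + 2 * y * (f x * g x) + g x ^ 2) := by
        congr 1; funext x; ring
      rw [e, intervalIntegral.integral_add, intervalIntegral.integral_add, intervalIntegral.integral_const_mul,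
        intervalIntegral.integral_const_mul] at h0
      · linarith
      all_goals exact Continuous.intervalIntegrable (by fun_prop) _ _
  rw [← Real.sqrt_mul hA]
  apply Real.le_sqrt_of_sq_le
  unfold discrim at key
  nlinarith

/-- The value of a function at the centre of a cell `[c - r, c + r]` is controlled by its integral
and a bound `k` on its derivative. -/
lemma cell_bound {g g' k : ℝ → ℝ} (hg : ∀ x, HasDerivAt g (g' x) x) (hg' : Continuous g')
    (hk : Continuous k) (hgk : ∀ x, |g' x| ≤ k x) (c r : ℝ) (hr : 0 ≤ r) :
    2 * r * g c ≤ (∫ x in (c - r)..(c + r), g x) + r * ∫ x in (c - r)..(c + r), k x := by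
  have hgc : Continuous g := continuous_iff_continuousAt.2 fun x => (hg x).continuousAt
  have hk0 : ∀ x, 0 ≤ k x := fun x => (abs_nonneg _).trans (hgk x)
  have gi : ∀ a b, IntervalIntegrable g volume a b := fun a b => hgc.intervalIntegrable _ _
  have ki : ∀ a b, IntervalIntegrable k volume a b := fun a b => hk.intervalIntegrable _ _
  have ftc : ∀ a b, a ≤ b → |g b - g a| ≤ ∫ x in a..b, k x := fun a b hab => by
    rw [← integral_eq_sub_of_hasDerivAt (fun x _ => hg x) (hg'.intervalIntegrable a b)]
    exact (abs_integral_le_integral_abs hab).trans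
      (integral_mono_on hab (hg'.abs.intervalIntegrable _ _) (ki _ _) fun x _ => hgk x)
  have right : r * g c ≤ (∫ x in c..(c + r), g x) + r * ∫ x in c..(c + r), k x := by
    have h : ∫ x in c..(c + r), (g c - ∫ x in c..(c + r), k x) ≤ ∫ x in c..(c + r), g x := by
      refine integral_mono_on (by linarith) (by simp) (gi _ _) fun x hx => ?_
      have h1 := ftc c x hx.1
      have h2 := integral_add_adjacent_intervals (ki c x) (ki x (c + r))
      have h3 : 0 ≤ ∫ y in x..(c + r), k y := integral_nonneg hx.2 fun y _ => hk0 y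
      have := (abs_le.1 h1).1
      linarith
    rw [intervalIntegral.integral_const, smul_eq_mul] at h
    linarith
  have left : r * g c ≤ (∫ x in (c - r)..c, g x) + r * ∫ x in (c - r)..c, k x := by
    have h : ∫ x in (c - r)..c, (g c - ∫ x in (c - r)..c, k x) ≤ ∫ x in (c - r)..c, g x := by
      refine integral_mono_on (by linarith) (by simp) (gi _ _) fun x hx => ?_
      have h1 := ftc x c hx.2
      have h2 := integral_add_adjacent_intervals (ki (c - r) x) (ki x c)
      have h3 : 0 ≤ ∫ y in (c - r)..x, k y := integral_nonneg hx.1 fun y _ => hk0 y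
      have := (abs_le.1 h1).2
      linarith
    rw [intervalIntegral.integral_const, smul_eq_mul] at h
    linarith
  rw [← integral_add_adjacent_intervals (gi (c - r) c) (gi c (c + r)),
    ← integral_add_adjacent_intervals (ki (c - r) c) (ki c (c + r))]
  linarith

/-- The discrete `L²` norm of `u` on the grid is at most `‖u‖ + (h/2) ‖u'‖` in `L²(0,1)`. -/
lemma discrete_bound (ε : ℝ) (N : ℕ) (hN : N ≠ 0) {u : ℝ → ℂ} (hu : ContDiff ℝ 1 u)
    (hper : Function.Periodic u 1) :
    (1 / (N : ℝ)) * ∑ j ∈ Finset.range N, ‖u (tg (1 / (N : ℝ)) ε (j : ℤ))‖ ^ 2 ≤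
      (Real.sqrt (∫ x in (0:ℝ)..1, ‖u x‖ ^ 2) +
        1 / (2 * N) * Real.sqrt (∫ x in (0:ℝ)..1, ‖deriv u x‖ ^ 2)) ^ 2 := by
  have hN' : (N : ℝ) ≠ 0 := by exact_mod_cast hN
  have hc := hu.continuous
  have hc' : Continuous (deriv u) := hu.continuous_deriv le_rfl
  set k : ℝ → ℝ := fun x => 2 * (‖u x‖ * ‖deriv u x‖) with hk
  have hkc : Continuous k := by fun_prop
  have hgc : Continuous fun x => ‖u x‖ ^ 2 := by fun_prop
  have hd : ∀ x, HasDerivAt (fun y => ‖u y‖ ^ 2) (2 * inner ℝ (u x) (deriv u x)) x := fun x =>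
    (hu.differentiable one_ne_zero x).hasDerivAt.norm_sq
  have hgk : ∀ x, |2 * inner ℝ (u x) (deriv u x)| ≤ k x := fun x => by
    rw [abs_mul, abs_two]
    exact mul_le_mul_of_nonneg_left (abs_real_inner_le_norm _ _) zero_le_two
  have cell := cell_bound hd (by fun_prop) hkc hgk
  have hperd : Function.Periodic (deriv u) 1 := fun x => by
    rw [← deriv_comp_add_const, funext hper]
  have hperg : Function.Periodic (fun x => ‖u x‖ ^ 2) 1 := fun x => by simp only [hper x]
  have hperk : Function.Periodic k 1 := fun x => by simp only [hk, hper x, hperd x]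
  -- The cells centred at the `tg` points are bounded by consecutive `sg` points.
  have tile : ∀ f : ℝ → ℝ, Continuous f → Function.Periodic f 1 →
      ∑ j ∈ Finset.range N, ∫ x in (tg (1 / (N : ℝ)) ε (j : ℤ) - 1 / (2 * N))..
        (tg (1 / (N : ℝ)) ε (j : ℤ) + 1 / (2 * N)), f x = ∫ x in (0:ℝ)..1, f x := by
    intro f hf hfp
    have h1 := sum_integral_adjacent_intervals (μ := volume) (f := f) (n := N)
      (a := fun j : ℕ => sg (1 / (N : ℝ)) ε (j : ℤ)) fun j _ => hf.intervalIntegrable _ _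
    have h2 := hfp.intervalIntegral_add_eq (sg (1 / (N : ℝ)) ε ((0 : ℕ) : ℤ)) 0
    have h3 : sg (1 / (N : ℝ)) ε (N : ℤ) = sg (1 / (N : ℝ)) ε ((0 : ℕ) : ℤ) + 1 := by
      simp only [sg]; push_cast; field_simp; ring
    rw [h3, h2, zero_add] at h1
    rw [← h1]
    refine Finset.sum_congr rfl fun j _ => ?_
    congr 1 <;> simp only [sg, tg] <;> push_cast <;> field_simp <;> ring
  have hsum := Finset.sum_le_sum fun j (_ : j ∈ Finset.range N) =>
    cell (tg (1 / (N : ℝ)) ε (j : ℤ)) (1 / (2 * N)) (by positivity)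
  rw [Finset.sum_add_distrib, ← Finset.mul_sum, ← Finset.mul_sum, tile _ hgc hperg,
    tile _ hkc hperk] at hsum
  have hcs := integral_mul_le_sqrt hc.norm hc'.norm
  have hki : ∫ x in (0:ℝ)..1, k x = 2 * ∫ x in (0:ℝ)..1, ‖u x‖ * ‖deriv u x‖ :=
    intervalIntegral.integral_const_mul _ _
  have hA := Real.sq_sqrt (integral_nonneg (μ := volume) (zero_le_one (α := ℝ))
    fun x _ => sq_nonneg ‖u x‖)
  have e : (2 : ℝ) * (1 / (2 * N)) = 1 / N := by field_simp
  rw [hki, e] at hsum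
  set A := Real.sqrt (∫ x in (0:ℝ)..1, ‖u x‖ ^ 2)
  set B := Real.sqrt (∫ x in (0:ℝ)..1, ‖deriv u x‖ ^ 2)
  have hr : (0:ℝ) ≤ 1 / (2 * N) := by positivity
  have := mul_le_mul_of_nonneg_left hcs hr
  nlinarith [sq_nonneg (1 / (2 * (N:ℝ)) * B)]

/-- `|h Σ_j ψ_j u(t_{j+ε})| ≤ ‖ψ_h‖₀ (‖u‖₀ + π h ‖u‖₁)`. -/
theorem stmt_10
    (ε : ℝ) (N : ℕ) [NeZero N] (ψ : ZMod N → ℂ)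
    (u : ℝ → ℂ) (hu : ContDiff ℝ 1 u) (hper : Function.Periodic u 1) :
    ‖(1 / (N : ℂ)) * ∑ j : ZMod N, ψ j * u (tg (1 / (N : ℝ)) ε ((j.val : ℕ) : ℤ))‖ ≤
      Real.sqrt ((1 / (N : ℝ)) * ∑ j : ZMod N, ‖ψ j‖ ^ 2)
        * (sobNorm 0 u + Real.pi * (1 / (N : ℝ)) * sobNorm 1 u) := by
  set U : ZMod N → ℂ := fun j => u (tg (1 / (N : ℝ)) ε ((j.val : ℕ) : ℤ)) with hU
  have hh : (0:ℝ) ≤ 1 / N := by positivity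
  have hsum : ∑ j : ZMod N, ‖U j‖ ^ 2 =
      ∑ j ∈ Finset.range N, ‖u (tg (1 / (N : ℝ)) ε (j : ℤ))‖ ^ 2 := by
    obtain ⟨n, rfl⟩ := Nat.exists_eq_succ_of_ne_zero (NeZero.ne N)
    exact Fin.sum_univ_eq_sum_range
      (fun j : ℕ => ‖u (tg (1 / ((n.succ : ℕ) : ℝ)) ε (j : ℤ))‖ ^ 2) n.succ
  have hdisc : Real.sqrt ((1 / (N : ℝ)) * ∑ j : ZMod N, ‖U j‖ ^ 2) ≤
      sobNorm 0 u + Real.pi * (1 / (N : ℝ)) * sobNorm 1 u := by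
    rw [hsum]
    refine (Real.sqrt_le_sqrt (discrete_bound ε N (NeZero.ne N) hu hper)).trans ?_
    rw [Real.sqrt_sq (by positivity), sobNorm_zero_eq hu.continuous]
    have h1 := mul_le_mul_of_nonneg_left (sqrt_integral_deriv_le hu hper)
      (show (0:ℝ) ≤ 1 / (2 * N) by positivity)
    have h2 : 1 / (2 * (N:ℝ)) * (2 * Real.pi * sobNorm 1 u) =
        Real.pi * (1 / (N : ℝ)) * sobNorm 1 u := by
      field_simp
    linarith
  refine le_trans ?_ (mul_le_mul_of_nonneg_left hdisc (Real.sqrt_nonneg _))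
  have hcs := Real.sum_mul_le_sqrt_mul_sqrt Finset.univ (fun j => ‖ψ j‖) (fun j => ‖U j‖)
  have hn : ‖∑ j, ψ j * U j‖ ≤ ∑ j, ‖ψ j‖ * ‖U j‖ :=
    (norm_sum_le _ _).trans_eq (by simp)
  rw [Real.sqrt_mul hh, Real.sqrt_mul hh, norm_mul]
  have e : ‖1 / (N : ℂ)‖ = Real.sqrt (1 / N) * Real.sqrt (1 / N) := by
    rw [Real.mul_self_sqrt hh]; simp
  rw [e]
  calc _ ≤ Real.sqrt (1 / N) * Real.sqrt (1 / N) *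
        (Real.sqrt (∑ j, ‖ψ j‖ ^ 2) * Real.sqrt (∑ j, ‖U j‖ ^ 2)) := by
        gcongr
        exact hn.trans hcs
    _ = _ := by ring
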